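/- Let p ∈ (0,1/2], let λ = σ^{−2}((1−p)³ + p³), and let β > 0. Suppose f ∈ L²({0,1}^n, μ_p) satisfies ‖D_S f‖₂² ≤ β·λ^{−|S|}·𝔼_{μ_p}[f²] for all S ⊆ [n]. Then ‖T_{1/√24} f‖₄ ≤ β^{1/4}·‖f‖₂. -/

import Mathlib

open Finset

namespace GlobalHC

variable {n : ℕ}

/-- Expectation with respect to the `p`-biased measure on `{0,1}^n`. -/
noncomputable def Ep (p : ℝ) (f : (Fin n → Bool) → ℝ) : ℝ :=
  ∑ x : Fin n → Bool, (∏ i, if x i then p else 1 - p) * f x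

/-- The `r`-norm with respect to the `p`-biased measure. -/
noncomputable def pnorm (p r : ℝ) (f : (Fin n → Bool) → ℝ) : ℝ :=
  (Ep p fun x => |f x| ^ r) ^ (1 / r)

/-- The `p`-biased character `χ_S`. -/
noncomputable def chi (p : ℝ) (S : Finset (Fin n)) (x : Fin n → Bool) : ℝ :=
  ∏ i ∈ S, ((if x i then (1 : ℝ) else 0) - p) / Real.sqrt (p * (1 - p))

/-- The `p`-biased Fourier coefficient `f̂(S)`. -/
noncomputable def coeff (p : ℝ) (f : (Fin n → Bool) → ℝ) (S : Finset (Fin n)) : ℝ :=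
  Ep p fun x => f x * chi p S x

/-- The derivative `D_S f = Σ_{T ⊇ S} f̂(T) χ_{T∖S}`. -/
noncomputable def derivS (p : ℝ) (S : Finset (Fin n)) (f : (Fin n → Bool) → ℝ) :
    (Fin n → Bool) → ℝ :=
  fun x => ∑ T ∈ Finset.univ.filter (fun T => S ⊆ T), coeff p f T * chi p (T \ S) x

/-- The generalised influence `I_S(f) = σ^{-2|S|} Σ_{T ⊇ S} f̂(T)²`. -/
noncomputable def genInf (p : ℝ) (S : Finset (Fin n)) (f : (Fin n → Bool) → ℝ) : ℝ :=
  (∑ T ∈ Finset.univ.filter (fun T => S ⊆ T), coeff p f T ^ 2) / (p * (1 - p)) ^ S.card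

/-- The noise operator `T_ρ f = Σ_S ρ^{|S|} f̂(S) χ_S`. -/
noncomputable def noise (p ρ : ℝ) (f : (Fin n → Bool) → ℝ) : (Fin n → Bool) → ℝ :=
  fun x => ∑ S : Finset (Fin n), ρ ^ S.card * coeff p f S * chi p S x

/-- The degree-`r` truncation `f^{≤ r}`. -/
noncomputable def trunc (p : ℝ) (r : ℕ) (f : (Fin n → Bool) → ℝ) : (Fin n → Bool) → ℝ :=
  fun x => ∑ S ∈ Finset.univ.filter (fun S : Finset (Fin n) => S.card ≤ r),
    coeff p f S * chi p S x

/-- The restriction `f_{J→1}` setting all coordinates in `J` to `1`. -/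
def restrict1 (J : Finset (Fin n)) (f : (Fin n → Bool) → ℝ) : (Fin n → Bool) → ℝ :=
  fun x => f (fun i => if i ∈ J then true else x i)

/-- `f` is `(r,δ)`-global (for the `p`-biased measure). -/
def IsGlobal (p r δ : ℝ) (f : (Fin n → Bool) → ℝ) : Prop :=
  ∀ J : Finset (Fin n), (J.card : ℝ) ≤ r → Ep p (restrict1 J f) ≤ Ep p f + δ

/-- The total influence `I[f] = Σ_i Pr_{μ_p}[f(x ⊕ e_i) ≠ f(x)]`. -/
noncomputable def totalInf (p : ℝ) (f : (Fin n → Bool) → ℝ) : ℝ :=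
  ∑ i : Fin n, Ep p fun x => if f (Function.update x i (!x i)) = f x then 0 else 1

/-- Noise stability `Stab_ρ(f) = Σ_S ρ^{|S|} f̂(S)²` (w.r.t. `μ_p`). -/
noncomputable def stab (p ρ : ℝ) (f : (Fin n → Bool) → ℝ) : ℝ :=
  ∑ S : Finset (Fin n), ρ ^ S.card * coeff p f S ^ 2

/-- `f` is monotone. -/
def Mono (f : (Fin n → Bool) → ℝ) : Prop :=
  ∀ x y : Fin n → Bool, (∀ i, x i ≤ y i) → f x ≤ f y


/-!
Tensorising a one-coordinate inequality gives, for all coefficients `a` and with `λ = 𝔼[χ_i⁴]`,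
`𝔼[(∑ a_S χ_S)⁴] ≤ ∑_S λ^|S| M_S²`, where `M_S = ∑_{T ⊇ S} 4^|T| a_T²`. The induction on the number
of coordinates needs the bilinear version of this bound, for `𝔼[g²h²]` with two functions `g`, `h`.
For `T_ρ f` we have `a_T = ρ^|T| f̂(T)`, hence `M_S ≤ ‖D_S f‖₂²` as soon as `4ρ² ≤ 1`, and the
hypothesis turns one factor `λ^|S| M_S` into `β ‖f‖₂²`. What remains is
`∑_S M_S = ∑_T (8ρ²)^|T| f̂(T)² ≤ ‖f‖₂²`.
-/

/-- The expectation of `g` under a single bit that is `true` with probability `p`. -/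
noncomputable def bitEp (p : ℝ) (g : Bool → ℝ) : ℝ :=
  p * g true + (1 - p) * g false

/-- The character `χ_i` as a function of the single bit `x i`. -/
noncomputable def bitChi (p : ℝ) (b : Bool) : ℝ :=
  ((if b then (1 : ℝ) else 0) - p) / Real.sqrt (p * (1 - p))

/-- The fourth moment `λ = 𝔼[χ_i⁴]` of a character of degree one. -/
noncomputable def chiKurtosis (p : ℝ) : ℝ :=
  bitEp p fun b => bitChi p b ^ 4

/-- The function `∑_{S ⊆ U} a_S χ_S` with Fourier coefficients `a`. -/
noncomputable def charSum (p : ℝ) (U : Finset (Fin n)) (a : Finset (Fin n) → ℝ)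
    (x : Fin n → Bool) : ℝ :=
  ∑ S ∈ U.powerset, a S * chi p S x

/-- The Fourier mass of `∑_{T ⊆ U} a_T χ_T` lying above `S`, a coefficient of degree `d` being
weighted by `4 ^ d`. -/
noncomputable def upperMass (U S : Finset (Fin n)) (a : Finset (Fin n) → ℝ) : ℝ :=
  ∑ T ∈ U.powerset with S ⊆ T, 4 ^ T.card * a T ^ 2

variable {p : ℝ}

section Expectation

theorem Ep_add (f g : (Fin n → Bool) → ℝ) :
    Ep p (fun x => f x + g x) = Ep p f + Ep p g := by
  simp [Ep, mul_add, sum_add_distrib]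

theorem Ep_const_mul (c : ℝ) (f : (Fin n → Bool) → ℝ) :
    Ep p (fun x => c * f x) = c * Ep p f := by
  simp only [Ep, mul_sum, mul_left_comm c]

theorem Ep_sum {ι : Type*} (s : Finset ι) (F : ι → (Fin n → Bool) → ℝ) :
    Ep p (fun x => ∑ j ∈ s, F j x) = ∑ j ∈ s, Ep p (F j) := by
  simp only [Ep, mul_sum]
  exact sum_comm

theorem Ep_mono (hp : 0 ≤ p) (hp1 : p ≤ 1) {f g : (Fin n → Bool) → ℝ} (h : ∀ x, f x ≤ g x) :
    Ep p f ≤ Ep p g := by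
  have hq : 0 ≤ 1 - p := sub_nonneg.2 hp1
  refine sum_le_sum fun x _ => mul_le_mul_of_nonneg_left (h x) (prod_nonneg fun i _ => ?_)
  split_ifs <;> assumption

theorem Ep_nonneg (hp : 0 ≤ p) (hp1 : p ≤ 1) {f : (Fin n → Bool) → ℝ} (h : ∀ x, 0 ≤ f x) :
    0 ≤ Ep p f := by
  simpa [Ep] using Ep_mono hp hp1 h

theorem Ep_prod (g : Fin n → Bool → ℝ) :
    Ep p (fun x => ∏ i, g i (x i)) = ∏ i, bitEp p (g i) := by
  have hbit (i : Fin n) : bitEp p (g i) = ∑ b, (if b then p else 1 - p) * g i b := by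
    simp [bitEp]
  simp only [hbit, prod_univ_sum, Fintype.piFinset_univ, Ep, prod_mul_distrib]

theorem Ep_const (c : ℝ) : Ep p (fun _ : Fin n → Bool => c) = c := by
  have hone : Ep p (fun _ : Fin n → Bool => 1) = 1 := by
    simpa [bitEp] using Ep_prod (n := n) (p := p) fun _ _ => 1
  simpa [hone] using Ep_const_mul (p := p) c fun _ : Fin n → Bool => 1

theorem Ep_eq_sum_funSplitAt (i : Fin n) (G : (Fin n → Bool) → ℝ) :
    Ep p G = ∑ y : {j // j ≠ i} → Bool, (∏ j, if y j then p else 1 - p) *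
      bitEp p fun b => G ((Equiv.funSplitAt i Bool).symm (b, y)) := by
  have hweight (b : Bool) (y : {j // j ≠ i} → Bool) :
      (∏ k, if (Equiv.funSplitAt i Bool).symm (b, y) k then p else 1 - p) =
        (if b then p else 1 - p) * ∏ j, if y j then p else 1 - p := by
    rw [Fintype.prod_eq_mul_prod_subtype_ne _ i]
    congr 1
    · simp
    · exact prod_congr rfl fun j _ => by simp [j.2]
  rw [Ep, ← (Equiv.funSplitAt i Bool).symm.sum_comp, Fintype.sum_prod_type_right]
  refine sum_congr rfl fun y _ => ?_
  simp only [hweight, Fintype.sum_bool, bitEp, if_true, Bool.false_eq_true, if_false]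
  ring

theorem Ep_eq_Ep_bitEp_update (i : Fin n) (G : (Fin n → Bool) → ℝ) :
    Ep p G = Ep p fun x => bitEp p fun b => G (Function.update x i b) := by
  have hupdate (b c : Bool) (y : {j // j ≠ i} → Bool) :
      Function.update ((Equiv.funSplitAt i Bool).symm (b, y)) i c =
        (Equiv.funSplitAt i Bool).symm (c, y) := by
    ext k
    by_cases hk : k = i
    · subst hk; simp
    · simp [hk]
  rw [Ep_eq_sum_funSplitAt i G, Ep_eq_sum_funSplitAt i]
  simp only [hupdate]
  refine sum_congr rfl fun y _ => ?_
  simp only [bitEp]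
  ring

end Expectation

section Norm

theorem pnorm_nonneg (hp : 0 ≤ p) (hp1 : p ≤ 1) (r : ℝ) (f : (Fin n → Bool) → ℝ) :
    0 ≤ pnorm p r f :=
  Real.rpow_nonneg (Ep_nonneg hp hp1 fun _ => by positivity) _

theorem pnorm_pow_of_even (hp : 0 ≤ p) (hp1 : p ≤ 1) {r : ℕ} (hr : Even r) (hr0 : r ≠ 0)
    (f : (Fin n → Bool) → ℝ) : pnorm p r f ^ r = Ep p fun x => f x ^ r := by
  simp only [pnorm, Real.rpow_natCast, hr.pow_abs, one_div]
  exact Real.rpow_inv_natCast_pow (Ep_nonneg hp hp1 fun _ => hr.pow_nonneg _) hr0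

theorem pnorm_two_sq (hp : 0 ≤ p) (hp1 : p ≤ 1) (f : (Fin n → Bool) → ℝ) :
    pnorm p 2 f ^ 2 = Ep p fun x => f x ^ 2 :=
  mod_cast pnorm_pow_of_even hp hp1 even_two two_ne_zero f

theorem pnorm_four_pow_four (hp : 0 ≤ p) (hp1 : p ≤ 1) (f : (Fin n → Bool) → ℝ) :
    pnorm p 4 f ^ 4 = Ep p fun x => f x ^ 4 :=
  mod_cast pnorm_pow_of_even hp hp1 (by decide : Even 4) four_ne_zero f

end Norm

section Character

theorem bitEp_bitChi : bitEp p (bitChi p) = 0 := by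
  simp only [bitEp, bitChi, if_true, Bool.false_eq_true, if_false]
  ring

theorem bitEp_bitChi_sq (hp : 0 < p) (hp1 : p < 1) : bitEp p (fun b => bitChi p b ^ 2) = 1 := by
  have hq : 0 < 1 - p := sub_pos.2 hp1
  simp only [bitEp, bitChi, div_pow, Real.sq_sqrt (mul_pos hp hq).le, if_true,
    Bool.false_eq_true, if_false]
  field_simp
  ring

theorem chiKurtosis_eq (hp : 0 < p) (hp1 : p < 1) :
    chiKurtosis p = ((1 - p) ^ 3 + p ^ 3) / (p * (1 - p)) := by
  have hq : 0 < 1 - p := sub_pos.2 hp1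
  have hsqrt : Real.sqrt (p * (1 - p)) ^ 4 = (p * (1 - p)) ^ 2 := by
    rw [pow_mul _ 2 2, Real.sq_sqrt (mul_pos hp hq).le]
  simp only [chiKurtosis, bitEp, bitChi, div_pow, hsqrt, if_true, Bool.false_eq_true, if_false]
  field_simp
  ring

theorem chiKurtosis_pos (hp : 0 < p) (hp1 : p < 1) : 0 < chiKurtosis p := by
  have : 0 < 1 - p := sub_pos.2 hp1
  rw [chiKurtosis_eq hp hp1]
  positivity

theorem chi_insert {i : Fin n} {S : Finset (Fin n)} (hi : i ∉ S) (x : Fin n → Bool) :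
    chi p (insert i S) x = bitChi p (x i) * chi p S x :=
  prod_insert hi

theorem chi_update {i : Fin n} {S : Finset (Fin n)} (hi : i ∉ S) (x : Fin n → Bool) (b : Bool) :
    chi p S (Function.update x i b) = chi p S x :=
  prod_congr rfl fun j hj => by
    rw [Function.update_of_ne (ne_of_mem_of_not_mem hj hi)]

theorem chi_eq_prod_univ (S : Finset (Fin n)) (x : Fin n → Bool) :
    chi p S x = ∏ i, if i ∈ S then bitChi p (x i) else 1 :=
  (Fintype.prod_ite_mem S fun i => bitChi p (x i)).symm

theorem Ep_chi_mul_chi (hp : 0 < p) (hp1 : p < 1) (S T : Finset (Fin n)) :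
    Ep p (fun x => chi p S x * chi p T x) = if S = T then 1 else 0 := by
  have hfactor (i : Fin n) :
      bitEp p (fun b => (if i ∈ S then bitChi p b else 1) * if i ∈ T then bitChi p b else 1) =
        if i ∈ S ↔ i ∈ T then 1 else 0 := by
    by_cases hS : i ∈ S <;> by_cases hT : i ∈ T <;> simp only [hS, hT, if_true, if_false]
    · simpa [sq] using bitEp_bitChi_sq hp hp1
    · simpa using bitEp_bitChi
    · simpa using bitEp_bitChi
    · simp [bitEp]
  simp only [chi_eq_prod_univ, ← prod_mul_distrib]
  rw [Ep_prod fun i b => (if i ∈ S then bitChi p b else 1) * if i ∈ T then bitChi p b else 1]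
  simp only [hfactor, Fintype.prod_ite_zero, prod_const_one, Finset.ext_iff]

theorem Ep_sum_chi_sq {ι : Type*} (hp : 0 < p) (hp1 : p < 1) {s : Finset ι} (a : ι → ℝ)
    {φ : ι → Finset (Fin n)} (hφ : Set.InjOn φ s) :
    Ep p (fun x => (∑ j ∈ s, a j * chi p (φ j) x) ^ 2) = ∑ j ∈ s, a j ^ 2 := by
  have hsq (x : Fin n → Bool) : (∑ j ∈ s, a j * chi p (φ j) x) ^ 2 =
      ∑ j ∈ s, ∑ k ∈ s, (a j * a k) * (chi p (φ j) x * chi p (φ k) x) := by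
    simp only [sq, sum_mul_sum, mul_mul_mul_comm]
  simp only [hsq, Ep_sum, Ep_const_mul, Ep_chi_mul_chi hp hp1]
  refine sum_congr rfl fun j hj => ?_
  have hoff : ∀ k ∈ s, k ≠ j → a j * a k * (if φ j = φ k then 1 else 0) = 0 := fun k hk hkj => by
    rw [if_neg fun h => hkj (hφ hk hj h.symm), mul_zero]
  rw [sum_eq_single_of_mem j hj hoff, if_pos rfl, mul_one, sq]

theorem Ep_charSum_univ_sq (hp : 0 < p) (hp1 : p < 1) (a : Finset (Fin n) → ℝ) :
    Ep p (fun x => charSum p univ a x ^ 2) = ∑ S, a S ^ 2 := by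
  simpa [charSum] using Ep_sum_chi_sq hp hp1 a (φ := id) Function.injective_id.injOn

theorem Ep_mul_charSum_univ (f : (Fin n → Bool) → ℝ) (a : Finset (Fin n) → ℝ) :
    Ep p (fun x => f x * charSum p univ a x) = ∑ S, a S * coeff p f S := by
  simp only [charSum, powerset_univ, mul_sum, mul_left_comm (f _), Ep_sum, Ep_const_mul, coeff]

theorem sum_coeff_sq_le (hp : 0 < p) (hp1 : p < 1) (f : (Fin n → Bool) → ℝ) :
    ∑ S, coeff p f S ^ 2 ≤ Ep p fun x => f x ^ 2 := by
  have hnonneg := Ep_nonneg hp.le hp1.le fun x => sq_nonneg (f x - charSum p univ (coeff p f) x)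
  have hexpand (x : Fin n → Bool) : (f x - charSum p univ (coeff p f) x) ^ 2 =
      f x ^ 2 + ((-2) * (f x * charSum p univ (coeff p f) x) +
        charSum p univ (coeff p f) x ^ 2) := by ring
  simp only [hexpand, Ep_add, Ep_const_mul, Ep_mul_charSum_univ, Ep_charSum_univ_sq hp hp1,
    ← sq] at hnonneg
  linarith

theorem Ep_derivS_sq (hp : 0 < p) (hp1 : p < 1) (S : Finset (Fin n)) (f : (Fin n → Bool) → ℝ) :
    Ep p (fun x => derivS p S f x ^ 2) = ∑ T with S ⊆ T, coeff p f T ^ 2 := by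
  refine Ep_sum_chi_sq hp hp1 (coeff p f) (φ := fun T => T \ S) fun T hT T' hT' h => ?_
  simp only [mem_coe, mem_filter, mem_univ, true_and] at hT hT'
  rw [← sdiff_union_of_subset hT, ← sdiff_union_of_subset hT']
  exact congrArg (· ∪ S) h

end Character

section FourthMoment

theorem sq_bitEp_pow_three_le (hp : 0 ≤ p) (hp1 : p ≤ 1) {φ : Bool → ℝ}
    (hvar : bitEp p (fun b => φ b ^ 2) = 1) :
    bitEp p (fun b => φ b ^ 3) ^ 2 ≤ bitEp p fun b => φ b ^ 4 := by
  set m := bitEp p fun b => φ b ^ 3 with hm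
  have hnonneg : 0 ≤ bitEp p fun b => (φ b ^ 2 - m * φ b) ^ 2 :=
    add_nonneg (mul_nonneg hp (sq_nonneg _)) (mul_nonneg (sub_nonneg.2 hp1) (sq_nonneg _))
  have hexpand : bitEp p (fun b => (φ b ^ 2 - m * φ b) ^ 2) =
      bitEp p (fun b => φ b ^ 4) - m ^ 2 := by
    simp only [bitEp] at hvar hm ⊢
    linear_combination 2 * m * hm + m ^ 2 * hvar
  linarith

theorem bitEp_affine_sq_mul_affine_sq {φ : Bool → ℝ} (hmean : bitEp p φ = 0)
    (hvar : bitEp p (fun b => φ b ^ 2) = 1) (g₀ g₁ h₀ h₁ : ℝ) :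
    bitEp p (fun b => (g₀ + φ b * g₁) ^ 2 * (h₀ + φ b * h₁) ^ 2) =
      g₀ ^ 2 * h₀ ^ 2 + (g₀ ^ 2 * h₁ ^ 2 + g₁ ^ 2 * h₀ ^ 2 + 4 * (g₀ * h₁) * (g₁ * h₀)) +
        2 * bitEp p (fun b => φ b ^ 3) * ((g₀ * h₁) * (g₁ * h₁) + (g₁ * h₀) * (g₁ * h₁)) +
        bitEp p (fun b => φ b ^ 4) * (g₁ ^ 2 * h₁ ^ 2) := by
  simp only [bitEp] at hmean hvar ⊢
  linear_combination (2 * g₀ * g₁ * h₀ ^ 2 + 2 * h₀ * h₁ * g₀ ^ 2) * hmean +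
    (g₀ ^ 2 * h₁ ^ 2 + g₁ ^ 2 * h₀ ^ 2 + 4 * g₀ * g₁ * h₀ * h₁) * hvar

theorem bitEp_affine_sq_mul_affine_sq_le (hp : 0 ≤ p) (hp1 : p ≤ 1) {φ : Bool → ℝ}
    (hmean : bitEp p φ = 0) (hvar : bitEp p (fun b => φ b ^ 2) = 1) (g₀ g₁ h₀ h₁ : ℝ) :
    bitEp p (fun b => (g₀ + φ b * g₁) ^ 2 * (h₀ + φ b * h₁) ^ 2) ≤
      g₀ ^ 2 * h₀ ^ 2 + 4 * (g₀ ^ 2 * h₁ ^ 2) + 4 * (g₁ ^ 2 * h₀ ^ 2) +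
        3 * bitEp p (fun b => φ b ^ 4) * (g₁ ^ 2 * h₁ ^ 2) := by
  rw [bitEp_affine_sq_mul_affine_sq hmean hvar]
  set m := bitEp p fun b => φ b ^ 3
  have hskew : m ^ 2 * (g₁ * h₁) ^ 2 ≤ bitEp p (fun b => φ b ^ 4) * (g₁ * h₁) ^ 2 :=
    mul_le_mul_of_nonneg_right (sq_bitEp_pow_three_le hp hp1 hvar) (sq_nonneg _)
  have hcross := two_mul_le_add_sq (g₀ * h₁) (g₁ * h₀)
  have hleft := two_mul_le_add_sq (g₀ * h₁) (m * (g₁ * h₁))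
  have hright := two_mul_le_add_sq (g₁ * h₀) (m * (g₁ * h₁))
  linarith

theorem charSum_insert_update {i : Fin n} {U : Finset (Fin n)} (hi : i ∉ U)
    (a : Finset (Fin n) → ℝ) (x : Fin n → Bool) (b : Bool) :
    charSum p (insert i U) a (Function.update x i b) =
      charSum p U a x + bitChi p b * charSum p U (fun S => a (insert i S)) x := by
  rw [charSum, sum_powerset_insert hi, charSum, charSum, mul_sum]
  congr 1 <;> refine sum_congr rfl fun S hS => ?_
  all_goals have hiS := notMem_of_mem_powerset_of_notMem hS hi
  · rw [chi_update hiS]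
  · rw [chi_insert hiS, chi_update hiS, Function.update_self, mul_left_comm]

theorem upperMass_nonneg (U S : Finset (Fin n)) (a : Finset (Fin n) → ℝ) :
    0 ≤ upperMass U S a :=
  sum_nonneg fun _ _ => by positivity

theorem upperMass_insert_left {i : Fin n} {U S : Finset (Fin n)} (hi : i ∉ U) (hS : S ⊆ U)
    (a : Finset (Fin n) → ℝ) :
    upperMass (insert i U) S a = upperMass U S a + 4 * upperMass U S fun T => a (insert i T) := by
  simp only [upperMass, sum_filter]
  rw [sum_powerset_insert hi, mul_sum]
  congr 1
  refine sum_congr rfl fun T hT => ?_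
  have hiT := notMem_of_mem_powerset_of_notMem hT hi
  simp only [subset_insert_iff_of_notMem fun h => hi (hS h), card_insert_of_notMem hiT, pow_succ',
    mul_assoc, mul_ite, mul_zero]

theorem upperMass_insert_insert {i : Fin n} {U S : Finset (Fin n)} (hi : i ∉ U) (hS : S ⊆ U)
    (a : Finset (Fin n) → ℝ) :
    upperMass (insert i U) (insert i S) a = 4 * upperMass U S fun T => a (insert i T) := by
  simp only [upperMass, sum_filter]
  have hbelow : ∀ T ∈ U.powerset,
      (if insert i S ⊆ T then 4 ^ T.card * a T ^ 2 else 0) = 0 := fun T hT =>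
    if_neg fun h => notMem_of_mem_powerset_of_notMem hT hi (h (mem_insert_self i S))
  rw [sum_powerset_insert hi, sum_eq_zero hbelow, zero_add, mul_sum]
  refine sum_congr rfl fun T hT => ?_
  have hiT := notMem_of_mem_powerset_of_notMem hT hi
  simp only [insert_subset_insert_iff fun h => hi (hS h), card_insert_of_notMem hiT, pow_succ',
    mul_assoc, mul_ite, mul_zero]

/-- The right-hand side of the bilinear fourth-moment bound `Ep_charSum_sq_mul_charSum_sq_le`:
`∑_{S ⊆ U} l^|S| M_S(a) M_S(b)`, where `M_S` is `upperMass U S`. -/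
noncomputable def massPairing (l : ℝ) (U : Finset (Fin n)) (a b : Finset (Fin n) → ℝ) : ℝ :=
  ∑ S ∈ U.powerset, l ^ S.card * (upperMass U S a * upperMass U S b)

theorem massPairing_nonneg {l : ℝ} (hl : 0 ≤ l) (U : Finset (Fin n))
    (a b : Finset (Fin n) → ℝ) : 0 ≤ massPairing l U a b :=
  sum_nonneg fun _ _ => mul_nonneg (pow_nonneg hl _)
    (mul_nonneg (upperMass_nonneg _ _ _) (upperMass_nonneg _ _ _))

theorem massPairing_insert (l : ℝ) {i : Fin n} {U : Finset (Fin n)} (hi : i ∉ U)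
    (a b : Finset (Fin n) → ℝ) :
    massPairing l (insert i U) a b =
      massPairing l U a b + 4 * massPairing l U a (fun S => b (insert i S)) +
        4 * massPairing l U (fun S => a (insert i S)) b +
        16 * (1 + l) * massPairing l U (fun S => a (insert i S)) fun S => b (insert i S) := by
  simp only [massPairing]
  rw [sum_powerset_insert hi]
  simp only [mul_sum, ← sum_add_distrib]
  refine sum_congr rfl fun S hS => ?_
  have hSU := mem_powerset.1 hS
  rw [upperMass_insert_left hi hSU, upperMass_insert_left hi hSU, upperMass_insert_insert hi hSU,
    upperMass_insert_insert hi hSU, card_insert_of_notMem fun h => hi (hSU h)]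
  ring

theorem Ep_charSum_sq_mul_charSum_sq_le (hp : 0 < p) (hp1 : p < 1) (U : Finset (Fin n))
    (a b : Finset (Fin n) → ℝ) :
    Ep p (fun x => charSum p U a x ^ 2 * charSum p U b x ^ 2) ≤
      massPairing (chiKurtosis p) U a b := by
  induction U using Finset.induction_on generalizing a b with
  | empty => simp [massPairing, upperMass, charSum, chi, Ep_const]
  | insert i U hi ih =>
    have hl := (chiKurtosis_pos hp hp1).le
    set a' : Finset (Fin n) → ℝ := fun S => a (insert i S) with ha'
    set b' : Finset (Fin n) → ℝ := fun S => b (insert i S) with hb'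
    have htop : 0 ≤ massPairing (chiKurtosis p) U a' b' := massPairing_nonneg hl U a' b'
    calc Ep p (fun x => charSum p (insert i U) a x ^ 2 * charSum p (insert i U) b x ^ 2)
        = Ep p fun x => bitEp p fun c => (charSum p U a x + bitChi p c * charSum p U a' x) ^ 2 *
            (charSum p U b x + bitChi p c * charSum p U b' x) ^ 2 := by
          rw [Ep_eq_Ep_bitEp_update i]
          simp only [charSum_insert_update hi, ha', hb']
      _ ≤ Ep p fun x => charSum p U a x ^ 2 * charSum p U b x ^ 2 +
            4 * (charSum p U a x ^ 2 * charSum p U b' x ^ 2) +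
            4 * (charSum p U a' x ^ 2 * charSum p U b x ^ 2) +
            3 * chiKurtosis p * (charSum p U a' x ^ 2 * charSum p U b' x ^ 2) :=
          Ep_mono hp.le hp1.le fun x => bitEp_affine_sq_mul_affine_sq_le hp.le hp1.le
            bitEp_bitChi (bitEp_bitChi_sq hp hp1) _ _ _ _
      _ ≤ massPairing (chiKurtosis p) U a b + 4 * massPairing (chiKurtosis p) U a b' +
            4 * massPairing (chiKurtosis p) U a' b +
            3 * chiKurtosis p * massPairing (chiKurtosis p) U a' b' := by
          simp only [Ep_add, Ep_const_mul]
          gcongr <;> apply ih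
      _ ≤ massPairing (chiKurtosis p) (insert i U) a b := by
          rw [massPairing_insert _ hi]
          linarith [mul_nonneg hl htop]

theorem Ep_charSum_univ_pow_four_le (hp : 0 < p) (hp1 : p < 1) (a : Finset (Fin n) → ℝ) :
    Ep p (fun x => charSum p univ a x ^ 4) ≤
      ∑ S, chiKurtosis p ^ S.card * upperMass univ S a ^ 2 := by
  have hpow (y : ℝ) : (y ^ 2) ^ 2 = y ^ 4 := (pow_mul y 2 2).symm
  simpa only [massPairing, powerset_univ, ← sq, hpow] using
    Ep_charSum_sq_mul_charSum_sq_le hp hp1 univ a a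

end FourthMoment

section Noise

theorem noise_eq_charSum (ρ : ℝ) (f : (Fin n → Bool) → ℝ) :
    noise p ρ f = charSum p univ fun S => ρ ^ S.card * coeff p f S := by
  simp only [funext_iff, noise, charSum, powerset_univ, implies_true]

theorem upperMass_univ_pow_card_mul (ρ : ℝ) (S : Finset (Fin n)) (c : Finset (Fin n) → ℝ) :
    upperMass univ S (fun T => ρ ^ T.card * c T) =
      ∑ T with S ⊆ T, (4 * ρ ^ 2) ^ T.card * c T ^ 2 := by
  simp only [upperMass, powerset_univ, mul_pow, mul_assoc, pow_right_comm ρ]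

theorem upperMass_noise_le {ρ : ℝ} (hp : 0 < p) (hp1 : p < 1) (hρ : 4 * ρ ^ 2 ≤ 1)
    (S : Finset (Fin n)) (f : (Fin n → Bool) → ℝ) :
    upperMass univ S (fun T => ρ ^ T.card * coeff p f T) ≤ pnorm p 2 (derivS p S f) ^ 2 := by
  rw [pnorm_two_sq hp.le hp1.le, Ep_derivS_sq hp hp1, upperMass_univ_pow_card_mul]
  exact sum_le_sum fun T _ =>
    mul_le_of_le_one_left (sq_nonneg _) (pow_le_one₀ (by positivity) hρ)

theorem sum_sum_superset (g : Finset (Fin n) → ℝ) :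
    ∑ S, ∑ T with S ⊆ T, g T = ∑ T, 2 ^ T.card * g T := by
  simp_rw [sum_filter]
  rw [sum_comm]
  refine sum_congr rfl fun T _ => ?_
  rw [← sum_filter, sum_const, filter_subset_univ, card_powerset, nsmul_eq_mul, Nat.cast_pow,
    Nat.cast_ofNat]

theorem sum_upperMass_noise_le {ρ : ℝ} (hp : 0 < p) (hp1 : p < 1) (hρ : 8 * ρ ^ 2 ≤ 1)
    (f : (Fin n → Bool) → ℝ) :
    ∑ S, upperMass univ S (fun T => ρ ^ T.card * coeff p f T) ≤ Ep p fun x => f x ^ 2 := by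
  simp only [upperMass_univ_pow_card_mul, sum_sum_superset, ← mul_assoc, ← mul_pow]
  refine (sum_le_sum fun T _ => ?_).trans (sum_coeff_sq_le hp hp1 f)
  exact mul_le_of_le_one_left (sq_nonneg _) (pow_le_one₀ (by positivity) (by linarith))

theorem Ep_noise_pow_four_le {ρ B : ℝ} (hp : 0 < p) (hp1 : p < 1) (hρ : 8 * ρ ^ 2 ≤ 1)
    (f : (Fin n → Bool) → ℝ)
    (hder : ∀ S, chiKurtosis p ^ S.card * pnorm p 2 (derivS p S f) ^ 2 ≤ B) :
    Ep p (fun x => noise p ρ f x ^ 4) ≤ B * Ep p fun x => f x ^ 2 := by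
  have hl := (chiKurtosis_pos hp hp1).le
  have hB : 0 ≤ B := le_trans (by positivity) (hder ∅)
  let M (S : Finset (Fin n)) : ℝ := upperMass univ S fun T => ρ ^ T.card * coeff p f T
  have hM (S : Finset (Fin n)) : chiKurtosis p ^ S.card * M S ≤ B :=
    (mul_le_mul_of_nonneg_left (upperMass_noise_le hp hp1 (by linarith [sq_nonneg ρ]) S f)
      (pow_nonneg hl _)).trans (hder S)
  calc Ep p (fun x => noise p ρ f x ^ 4)
      ≤ ∑ S, chiKurtosis p ^ S.card * M S ^ 2 := by
        rw [noise_eq_charSum]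
        exact Ep_charSum_univ_pow_four_le hp hp1 _
    _ ≤ ∑ S, B * M S := sum_le_sum fun S _ => by
        rw [sq, ← mul_assoc]
        exact mul_le_mul_of_nonneg_right (hM S) (upperMass_nonneg _ _ _)
    _ = B * ∑ S, M S := (mul_sum _ _ _).symm
    _ ≤ B * Ep p fun x => f x ^ 2 :=
        mul_le_mul_of_nonneg_left (sum_upperMass_noise_le hp hp1 hρ f) hB

end Noise

theorem statement2_general {β ρ lam : ℝ} (hp : 0 < p) (hp1 : p < 1) (hβ : 0 ≤ β)
    (hρ : 8 * ρ ^ 2 ≤ 1) (hlam : lam = ((1 - p) ^ 3 + p ^ 3) / (p * (1 - p)))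
    (f : (Fin n → Bool) → ℝ)
    (hder : ∀ S : Finset (Fin n),
      pnorm p 2 (derivS p S f) ^ 2 ≤ β * lam ^ (-(S.card : ℤ)) * Ep p (fun x => f x ^ 2)) :
    pnorm p 4 (noise p ρ f) ≤ β ^ ((1 : ℝ) / 4) * pnorm p 2 f := by
  obtain rfl : lam = chiKurtosis p := hlam.trans (chiKurtosis_eq hp hp1).symm
  have hl := chiKurtosis_pos hp hp1
  have hnorm := pnorm_two_sq hp.le hp1.le f
  have hmass (S : Finset (Fin n)) :
      chiKurtosis p ^ S.card * pnorm p 2 (derivS p S f) ^ 2 ≤ β * pnorm p 2 f ^ 2 := by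
    have h := hder S
    rwa [← hnorm, zpow_neg, zpow_natCast, mul_right_comm, ← div_eq_mul_inv,
      le_div_iff₀' (pow_pos hl _)] at h
  have hroot : (β ^ ((1 : ℝ) / 4)) ^ 4 = β := by
    simpa using Real.rpow_inv_natCast_pow hβ four_ne_zero
  refine le_of_pow_le_pow_left₀ four_ne_zero
    (mul_nonneg (Real.rpow_nonneg hβ _) (pnorm_nonneg hp.le hp1.le 2 f)) ?_
  calc pnorm p 4 (noise p ρ f) ^ 4 = Ep p fun x => noise p ρ f x ^ 4 :=
        pnorm_four_pow_four hp.le hp1.le _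
    _ ≤ β * pnorm p 2 f ^ 2 * pnorm p 2 f ^ 2 := by
        simpa only [hnorm] using Ep_noise_pow_four_le hp hp1 hρ f hmass
    _ = (β ^ ((1 : ℝ) / 4) * pnorm p 2 f) ^ 4 := by rw [mul_pow, hroot]; ring

/-- hypercontractivity under a derivative-norm hypothesis. -/
theorem statement2 {n : ℕ} (p β : ℝ) (hp : 0 < p) (hp' : p ≤ 1/2) (hβ : 0 < β)
    (lam : ℝ) (hlam : lam = ((1 - p) ^ 3 + p ^ 3) / (p * (1 - p)))
    (f : (Fin n → Bool) → ℝ)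
    (hder : ∀ S : Finset (Fin n),
      pnorm p 2 (derivS p S f) ^ 2 ≤ β * lam ^ (-(S.card : ℤ)) * Ep p (fun x => f x ^ 2)) :
    pnorm p 4 (noise p (1 / Real.sqrt 24) f) ≤ β ^ ((1 : ℝ)/4) * pnorm p 2 f :=
  statement2_general hp (by linarith) hβ.le (by norm_num [div_pow]) hlam f hder

end GlobalHC
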